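/- Let (A,[·,·],▷,α,β) be a regular BiHom-post-Lie algebra over a field K of characteristic zero. Define x ▶ y = x ▷ y + [x,y]. Then (A,−[·,·],▶,α,β) is also a BiHom-post-Lie algebra, and (A,[·,·],▷,α,β) and (A,−[·,·],▶,α,β) have the same sub-adjacent BiHom-Lie algebra, i.e., x ▶ y − α⁻¹β(y) ▶ αβ⁻¹(x) − [x,y] = x ▷ y − α⁻¹β(y) ▷ αβ⁻¹(x) + [x,y] for all x,y ∈ A. -/

import Mathlib

section Defs

variable (K : Type*) [Field K]
variable {A V : Type*} [AddCommGroup A] [Module K A] [AddCommGroup V] [Module K V]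

/-- `f : A → A → V` is bilinear over `K`. -/
def IsBilin (f : A → A → V) : Prop :=
  (∀ y, IsLinearMap K fun x => f x y) ∧ (∀ x, IsLinearMap K fun y => f x y)

/-- `b` is a Lie bracket on `A`. -/
def IsLieBracket (b : A → A → A) : Prop :=
  IsBilin K b ∧ (∀ x y, b x y = - b y x) ∧
    (∀ x y z, b x (b y z) + b y (b z x) + b z (b x y) = 0)

/-- `(A, b, t)` is a (left) post-Lie algebra. -/
def IsPostLie (b t : A → A → A) : Prop :=
  IsLieBracket K b ∧ IsBilin K t ∧
    (∀ x y z, t x (b y z) = b (t x y) z + b y (t x z)) ∧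
    (∀ x y z, t (b x y) z =
      (t x (t y z) - t (t x y) z) - (t y (t x z) - t (t y x) z))

/-- `ρ` is a representation of the Lie algebra `(A, b)` on `V`. -/
def IsLieRep (b : A → A → A) (ρ : A → V → V) : Prop :=
  (∀ x, IsLinearMap K (ρ x)) ∧ (∀ v, IsLinearMap K fun x => ρ x v) ∧
    (∀ x y v, ρ (b x y) v = ρ x (ρ y v) - ρ y (ρ x v))

/-- `(A, b, α, β)` is a BiHom-Lie algebra. -/
def IsBiHomLie (b : A → A → A) (α β : A → A) : Prop :=
  IsBilin K b ∧ IsLinearMap K α ∧ IsLinearMap K β ∧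
    (∀ x, α (β x) = β (α x)) ∧
    (∀ x y, α (b x y) = b (α x) (α y)) ∧
    (∀ x y, β (b x y) = b (β x) (β y)) ∧
    (∀ x y, b (β x) (α y) = - b (β y) (α x)) ∧
    (∀ x y z, b (β (β x)) (b (β y) (α z)) + b (β (β y)) (b (β z) (α x)) +
        b (β (β z)) (b (β x) (α y)) = 0)

/-- `(V, ρ, φ, ψ)` is a representation of the BiHom-Lie algebra `(A, b, α, β)`. -/
def IsBiHomRep (b : A → A → A) (α β : A → A) (ρ : A → V → V) (φ ψ : V → V) : Prop :=
  IsLinearMap K φ ∧ IsLinearMap K ψ ∧ (∀ v, φ (ψ v) = ψ (φ v)) ∧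
    (∀ x, IsLinearMap K (ρ x)) ∧ (∀ v, IsLinearMap K fun x => ρ x v) ∧
    (∀ x v, ρ (α x) (φ v) = φ (ρ x v)) ∧
    (∀ x v, ρ (β x) (ψ v) = ψ (ρ x v)) ∧
    (∀ x y v, ρ (b (β x) y) (ψ v) = ρ (α (β x)) (ρ y v) - ρ (β y) (ρ (α x) v))

/-- `(A, b, t, α, β)` is a (left) BiHom-post-Lie algebra. -/
def IsBiHomPostLie (b t : A → A → A) (α β : A → A) : Prop :=
  IsBiHomLie K b α β ∧ IsBilin K t ∧
    (∀ x y, α (t x y) = t (α x) (α y)) ∧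
    (∀ x y, β (t x y) = t (β x) (β y)) ∧
    (∀ x y z, t (α (β x)) (b y z) = b (t (β x) y) (β z) + b (β y) (t (α x) z)) ∧
    (∀ x y z, t (b (β x) (α y)) (β z) =
      (t (α (β x)) (t (α y) z) - t (t (β x) (α y)) (β z)) -
      (t (α (β y)) (t (α x) z) - t (t (β y) (α x)) (β z)))

/-- `(V, bv, ρ, φ, ψ)` is an `A`-module `K`-algebra over the BiHom-Lie algebra
`(A, b, α, β)`. -/
def IsModuleKAlgebra (b : A → A → A) (α β : A → A) (bv : V → V → V)
    (ρ : A → V → V) (φ ψ : V → V) : Prop :=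
  IsBiHomLie K bv φ ψ ∧ IsBiHomRep K b α β ρ φ ψ ∧
    (∀ x u v, ρ (α (β x)) (bv u v) = bv (ρ (β x) u) (ψ v) + bv (ψ u) (ρ (α x) v))

end Defs

/-!
When `α` and `β` are surjective, the BiHom-Jacobi identity is a Leibniz rule for the bracket over
itself. Hence `▶ = ▷ + [·,·]` inherits from `▷` the Leibniz rule over the bracket. By the same two
rules, passing from `▷` to `▶` changes `as(β x, α y, z)` by `-[β x, α y] ▷ β z`, by a term
symmetric in `x` and `y`, and by `[αβ y, [α x, z]]`. After antisymmetrizing in `x` and `y`, the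
first change turns `[β x, α y] ▷ β z` into `-[β x, α y] ▷ β z`, and the last one contributes
`-[[β x, α y], β z]` by the Leibniz rule, which together is `(-[β x, α y]) ▶ β z`.
-/

namespace IsBilin

variable {K A V : Type*} [Field K] [AddCommGroup A] [Module K A] [AddCommGroup V] [Module K V]
variable {f g : A → A → V}

theorem map_add_left (hf : IsBilin K f) (x x' y : A) : f (x + x') y = f x y + f x' y :=
  (hf.1 y).map_add x x'

theorem map_add_right (hf : IsBilin K f) (x y y' : A) : f x (y + y') = f x y + f x y' :=
  (hf.2 x).map_add y y'

theorem map_neg_left (hf : IsBilin K f) (x y : A) : f (-x) y = -f x y :=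
  (hf.1 y).map_neg x

theorem map_neg_right (hf : IsBilin K f) (x y : A) : f x (-y) = -f x y :=
  (hf.2 x).map_neg y

theorem neg (hf : IsBilin K f) : IsBilin K (-f) :=
  ⟨fun y => (-(hf.1 y).mk').isLinear, fun x => (-(hf.2 x).mk').isLinear⟩

theorem add (hf : IsBilin K f) (hg : IsBilin K g) : IsBilin K (f + g) :=
  ⟨fun y => ((hf.1 y).mk' + (hg.1 y).mk').isLinear,
    fun x => ((hf.2 x).mk' + (hg.2 x).mk').isLinear⟩

end IsBilin

section Operations

variable {A : Type*} [AddCommGroup A]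

/-- The BiHom-associator `as(x, y, z)` of the operation `t`, which enters the last axiom of a
BiHom-post-Lie algebra. -/
def biHomAssociator (t : A → A → A) (α β : A → A) (x y z : A) : A :=
  t (α x) (t y z) - t (t x y) (β z)

/-- The sub-adjacent bracket `{x, y}` of a regular BiHom-post-Lie algebra. The maps `α'` and `β'`
stand for `α⁻¹` and `β⁻¹`. -/
def subAdjacentBracket (b t : A → A → A) (α β α' β' : A → A) (x y : A) : A :=
  t x y - t (α' (β y)) (α (β' x)) + b x y

end Operations

namespace IsBiHomLie

variable {K A : Type*} [Field K] [AddCommGroup A] [Module K A]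
variable {b : A → A → A} {α β : A → A}

theorem neg (h : IsBiHomLie K b α β) : IsBiHomLie K (-b) α β := by
  obtain ⟨hb, hα, hβ, hcomm, hαb, hβb, hskew, hjacobi⟩ := h
  refine ⟨hb.neg, hα, hβ, hcomm, fun x y => ?_, fun x y => ?_, fun x y => ?_, fun x y z => ?_⟩
  · simp only [Pi.neg_apply, hα.map_neg, hαb]
  · simp only [Pi.neg_apply, hβ.map_neg, hβb]
  · simp only [Pi.neg_apply, hskew x y]
  · simpa only [Pi.neg_apply, hb.map_neg_right, neg_neg] using hjacobi x y z

theorem leibniz (h : IsBiHomLie K b α β) (hα : Function.Surjective α)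
    (hβ : Function.Surjective β) (x y z : A) :
    b (α (β x)) (b y z) = b (b (β x) y) (β z) + b (β y) (b (α x) z) := by
  obtain ⟨hb, -, -, hcomm, hαb, hβb, hskew, hjacobi⟩ := h
  -- In these coordinates the Leibniz rule is the Jacobi identity for `α u`, `v`, `w`.
  obtain ⟨u, rfl⟩ := hβ x
  obtain ⟨v, rfl⟩ := hβ y
  obtain ⟨w, rfl⟩ := hα z
  have swap_inner : b (β w) (α (α u)) = -b (β (α u)) (α w) := hskew w (α u)
  have swap_outer : b (β (β w)) (α (b (β u) v)) = -b (β (b (β u) v)) (α (β w)) :=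
    hskew (β w) (b (β u) v)
  have jacobi := hjacobi (α u) v w
  simp only [hαb, hβb, hcomm] at swap_inner swap_outer jacobi ⊢
  rw [swap_inner, swap_outer, hb.map_neg_right] at jacobi
  rw [← sub_eq_zero, ← jacobi]
  abel

theorem skew_of_inverse (h : IsBiHomLie K b α β) {α' β' : A → A}
    (hαr : Function.RightInverse α' α) (hαl : Function.LeftInverse α' α)
    (hβr : Function.RightInverse β' β) (x y : A) :
    b x y = -b (α' (β y)) (α (β' x)) := by
  obtain ⟨-, -, -, hcomm, -, -, hskew, -⟩ := h
  have hα'β : Function.Semiconj β α' α' :=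
    Function.Semiconj.inverses_right (fun x => (hcomm x).symm) hαr hαl
  calc b x y = b (β (β' x)) (α (α' y)) := by rw [hβr, hαr]
    _ = -b (β (α' y)) (α (β' x)) := hskew (β' x) (α' y)
    _ = -b (α' (β y)) (α (β' x)) := by rw [hα'β y]

theorem subAdjacentBracket_neg_add (h : IsBiHomLie K b α β) (t : A → A → A) {α' β' : A → A}
    (hαr : Function.RightInverse α' α) (hαl : Function.LeftInverse α' α)
    (hβr : Function.RightInverse β' β) :
    subAdjacentBracket (-b) (t + b) α β α' β' = subAdjacentBracket b t α β α' β' := by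
  ext x y
  simp only [subAdjacentBracket, Pi.add_apply, Pi.neg_apply,
    h.skew_of_inverse hαr hαl hβr x y]
  abel

end IsBiHomLie

namespace IsBiHomPostLie

variable {K A : Type*} [Field K] [AddCommGroup A] [Module K A]
variable {b t : A → A → A} {α β : A → A}

theorem add_bracket_leibniz (h : IsBiHomPostLie K b t α β) (hα : Function.Surjective α)
    (hβ : Function.Surjective β) (x y z : A) :
    (t + b) (α (β x)) (b y z) = b ((t + b) (β x) y) (β z) + b (β y) ((t + b) (α x) z) := by
  obtain ⟨hLie, -, -, -, hderiv, -⟩ := h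
  simp only [Pi.add_apply, hLie.1.map_add_left, hLie.1.map_add_right, hderiv,
    hLie.leibniz hα hβ x y z]
  abel

theorem biHomAssociator_add_bracket (h : IsBiHomPostLie K b t α β) (hα : Function.Surjective α)
    (hβ : Function.Surjective β) (x y z : A) :
    biHomAssociator (t + b) α β (β x) (α y) z =
      biHomAssociator t α β (β x) (α y) z - t (b (β x) (α y)) (β z) +
        (b (α (β x)) (t (α y) z) + b (α (β y)) (t (α x) z)) + b (α (β y)) (b (α x) z) := by
  obtain ⟨hLie, ht, -, -, hderiv, -⟩ := h
  have hcomm : α (β y) = β (α y) := hLie.2.2.2.1 y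
  simp only [biHomAssociator, Pi.add_apply, hLie.1.map_add_left, hLie.1.map_add_right,
    ht.map_add_left, ht.map_add_right, hderiv, hLie.leibniz hα hβ x (α y) z, hcomm]
  abel

theorem add_bracket_neg_bracket (h : IsBiHomPostLie K b t α β) (hα : Function.Surjective α)
    (hβ : Function.Surjective β) (x y z : A) :
    (t + b) (-b (β x) (α y)) (β z) =
      biHomAssociator (t + b) α β (β x) (α y) z - biHomAssociator (t + b) α β (β y) (α x) z := by
  rw [h.biHomAssociator_add_bracket hα hβ, h.biHomAssociator_add_bracket hα hβ]
  obtain ⟨hLie, ht, -, -, -, hassoc⟩ := h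
  obtain ⟨hb, -, -, hcomm, -, -, hskew, -⟩ := id hLie
  have associator_skew : biHomAssociator t α β (β x) (α y) z =
      t (b (β x) (α y)) (β z) + biHomAssociator t α β (β y) (α x) z :=
    sub_eq_iff_eq_add.mp (hassoc x y z).symm
  have leibniz : b (α (β x)) (b (α y) z) =
      b (b (β x) (α y)) (β z) + b (α (β y)) (b (α x) z) := by
    rw [hLie.leibniz hα hβ, hcomm y]
  rw [associator_skew, leibniz, hskew y x]
  simp only [Pi.add_apply, ht.map_neg_left, hb.map_neg_left]
  abel

theorem neg_add_bracket (h : IsBiHomPostLie K b t α β) (hα : Function.Surjective α)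
    (hβ : Function.Surjective β) : IsBiHomPostLie K (-b) (t + b) α β := by
  have bracket_action := h.add_bracket_neg_bracket hα hβ
  have leibniz := h.add_bracket_leibniz hα hβ
  obtain ⟨hLie, ht, hαt, hβt, -, -⟩ := h
  obtain ⟨hb, hαlin, hβlin, -, hαb, hβb, -, -⟩ := id hLie
  refine ⟨hLie.neg, ht.add hb, fun x y => ?_, fun x y => ?_, fun x y z => ?_, bracket_action⟩
  · simp only [Pi.add_apply, hαlin.map_add, hαt, hαb]
  · simp only [Pi.add_apply, hβlin.map_add, hβt, hβb]
  · calc (t + b) (α (β x)) (-b y z) = -(t + b) (α (β x)) (b y z) := (ht.add hb).map_neg_right _ _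
      _ = -b ((t + b) (β x) y) (β z) + -b (β y) ((t + b) (α x) z) := by rw [leibniz, neg_add]

end IsBiHomPostLie

theorem black_biHomPostLie_general {K A : Type*} [Field K]
    [AddCommGroup A] [Module K A] (b t : A → A → A) (α β α' β' : A → A)
    (h : IsBiHomPostLie K b t α β)
    (hαα' : ∀ x, α (α' x) = x) (hα'α : ∀ x, α' (α x) = x) (hββ' : ∀ x, β (β' x) = x) :
    IsBiHomPostLie K (fun x y => - b x y) (fun x y => t x y + b x y) α β ∧
      (∀ x y,
        (t x y + b x y) -
            (t (α' (β y)) (α (β' x)) + b (α' (β y)) (α (β' x))) - b x y =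
          t x y - t (α' (β y)) (α (β' x)) + b x y) := by
  have hα : Function.Surjective α := Function.RightInverse.surjective hαα'
  have hβ : Function.Surjective β := Function.RightInverse.surjective hββ'
  refine ⟨h.neg_add_bracket hα hβ, fun x y => ?_⟩
  have hsub := h.1.subAdjacentBracket_neg_add t hαα' hα'α hββ'
  simpa only [subAdjacentBracket, Pi.add_apply, Pi.neg_apply, ← sub_eq_add_neg] using
    congrFun₂ hsub x y

/-- `(A, -[·,·], ▶, α, β)` with `x ▶ y = x ▷ y + [x,y]` is a
BiHom-post-Lie algebra with the same sub-adjacent BiHom-Lie algebra. -/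
theorem black_biHomPostLie {K A : Type*} [Field K] [CharZero K]
    [AddCommGroup A] [Module K A] (b t : A → A → A) (α β α' β' : A → A)
    (h : IsBiHomPostLie K b t α β)
    (hαα' : ∀ x, α (α' x) = x) (hα'α : ∀ x, α' (α x) = x)
    (hββ' : ∀ x, β (β' x) = x) (hβ'β : ∀ x, β' (β x) = x) :
    IsBiHomPostLie K (fun x y => - b x y) (fun x y => t x y + b x y) α β ∧
      (∀ x y,
        (t x y + b x y) -
            (t (α' (β y)) (α (β' x)) + b (α' (β y)) (α (β' x))) - b x y =
          t x y - t (α' (β y)) (α (β' x)) + b x y) :=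
  black_biHomPostLie_general b t α β α' β' h hαα' hα'α hββ'
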